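/- Let g and h be prefix replacement permutations of the Cantor set C = ℕ → Bool, suppose g has infinite order, and let r, s be integers such that h⁻¹ ∘ gʳ ∘ h = gˢ. Then |r| = |s|. -/

import Mathlib

/-!
A power `g ^ k` is said to expand a cone by `p > 0` letters if it maps the cone of some word `w` to
the cone of `w ++ v` by prefix replacement, with `|v| = p`. Let `λ(g)` be the supremum of `p / |k|`
over all such `k` and `p`. Expanding a cone is invariant under conjugation by prefix replacement
maps, as the expanded cone can be moved deep inside itself before conjugating, and iterating
multiplies `p`; hence `λ(h g h⁻¹) = λ(g)` and `λ(g ^ n) = |n| λ(g)`. So `|r| λ(g) = |s| λ(g)`, and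
it remains to see that `0 < λ(g) < ∞` for `g` of infinite order. Finiteness holds since `g` changes
the lengths of prefixes by a bounded amount.

For positivity, view the orbit of a long word under `g` as a run of a stack machine that reads only
the top `D` letters. If no power of `g` expands a cone, then the height of the stack varies by a
bounded amount: after a large rise, the pigeonhole principle gives two times with the same top word
`w` such that the machine never looks below `w` between them, so that a power of `g` maps `w` to
some `w ++ v`; a large drop is a large rise for `g⁻¹`. Thus all powers of `g` satisfy one common
bound, and there are only finitely many prefix replacement maps with a given bound.
-/

/-- The Cantor set `C = ℕ → Bool`. -/
abbrev Cantor : Type := ℕ → Bool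

/-- Prepend a finite word `a` to an element `ξ` of the Cantor set. -/
def prepend (a : List Bool) (ξ : Cantor) : Cantor :=
  fun n => if h : n < a.length then a.get ⟨n, h⟩ else ξ (n - a.length)

/-- A finite set of finite binary words is a complete antichain if distinct elements
are incomparable in the prefix order and every `ξ : ℕ → Bool` has an initial segment
lying in it. -/
def IsCompleteAntichain (A : Set (List Bool)) : Prop :=
  A.Finite ∧
  (∀ a ∈ A, ∀ b ∈ A, a ≠ b → ¬ a <+: b) ∧
  (∀ ξ : Cantor, ∃ n : ℕ, (List.ofFn fun i : Fin n => ξ i) ∈ A)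

/-- A permutation of the Cantor set is a prefix replacement map if it is given by
a bijection between two finite complete antichains of prefixes. -/
def IsPrefixReplacement (g : Equiv.Perm Cantor) : Prop :=
  ∃ A B : Set (List Bool), IsCompleteAntichain A ∧ IsCompleteAntichain B ∧
    ∃ σ : A ≃ B, ∀ (a : A) (ξ : Cantor), g (prepend a ξ) = prepend (σ a : List Bool) ξ

/-! ### Prepending words -/

lemma prepend_append (a b : List Bool) (ξ : Cantor) :
    prepend (a ++ b) ξ = prepend a (prepend b ξ) := by
  funext n
  simp only [prepend, List.get_eq_getElem, List.length_append, List.getElem_append]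
  grind

lemma prepend_apply_of_lt {a : List Bool} {n : ℕ} (h : n < a.length) (ξ : Cantor) :
    prepend a ξ n = a[n] := by
  simp [prepend, h]

lemma length_le_of_prepend_eq {u v : List Bool} (h : prepend u = prepend v) :
    v.length ≤ u.length := by
  by_contra! hlt
  have letter_eq (b : Bool) : v[u.length] = b := by
    rw [← prepend_apply_of_lt hlt fun _ => b, ← h]
    simp [prepend]
  exact Bool.false_ne_true ((letter_eq false).symm.trans (letter_eq true))

lemma prepend_injective : Function.Injective prepend := by
  intro u v h
  have hlen : u.length = v.length :=
    le_antisymm (length_le_of_prepend_eq h.symm) (length_le_of_prepend_eq h)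
  refine List.ext_getElem hlen fun n hu hv => ?_
  rw [← prepend_apply_of_lt hu fun _ => false, h, prepend_apply_of_lt hv]

lemma prepend_ofFn (x : Cantor) (n : ℕ) :
    prepend (List.ofFn fun i : Fin n => x i) (fun m => x (m + n)) = x := by
  funext m
  by_cases h : m < n
  · simp [prepend, h]
  · simp [prepend, h, Nat.sub_add_cancel (not_lt.mp h)]

lemma ofFn_prepend {u : List Bool} {n : ℕ} (h : n ≤ u.length) (ξ : Cantor) :
    (List.ofFn fun i : Fin n => prepend u ξ i) = u.take n := by
  refine List.ext_getElem (by simpa using h) fun i hi _ => ?_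
  rw [List.length_ofFn] at hi
  simp [prepend_apply_of_lt (hi.trans_le h)]

/-! ### Cones -/

/-- `f` maps the cone of points with prefix `u` onto the cone of points with prefix `v`, by
replacing the prefix. -/
def MapsCone (f : Equiv.Perm Cantor) (u v : List Bool) : Prop :=
  ∀ ξ, f (prepend u ξ) = prepend v ξ

namespace MapsCone

variable {f f' : Equiv.Perm Cantor} {u v w z : List Bool}

lemma one (u : List Bool) : MapsCone 1 u u := fun _ => rfl

lemma mul (h' : MapsCone f' v w) (h : MapsCone f u v) : MapsCone (f' * f) u w := fun ξ => by
  rw [Equiv.Perm.mul_apply, h, h']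

lemma inv (h : MapsCone f u v) : MapsCone f⁻¹ v u := fun ξ => by
  rw [Equiv.Perm.inv_eq_iff_eq, h]

lemma of_mul (h : MapsCone (f' * f) u w) (hf : MapsCone f u v) : MapsCone f' v w := by
  simpa using h.mul hf.inv

lemma append (h : MapsCone f u v) (t : List Bool) : MapsCone f (u ++ t) (v ++ t) := fun ξ => by
  rw [prepend_append, prepend_append, h]

lemma unique (h : MapsCone f u v) (h' : MapsCone f u w) : v = w :=
  prepend_injective <| funext fun ξ => by rw [← h, ← h']

lemma conj (h : MapsCone f w (w ++ v)) (hz : MapsCone f' w z) :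
    MapsCone (f' * f * f'⁻¹) z (z ++ v) :=
  ((hz.append v).mul h).mul hz.inv

lemma exists_pow (h : MapsCone f w (w ++ v)) (n : ℕ) :
    ∃ v', v'.length = n * v.length ∧ MapsCone (f ^ n) w (w ++ v') := by
  induction n with
  | zero => exact ⟨[], by simp, by simpa using one w⟩
  | succ n ih =>
    obtain ⟨v', hv', hn⟩ := ih
    refine ⟨v ++ v', by rw [List.length_append, hv']; ring, ?_⟩
    rw [pow_succ', ← List.append_assoc]
    exact (h.append v').mul hn

end MapsCone

/-- The quantitative form of `IsPrefixReplacement`: `f` acts by prefix replacement on every cone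
given by a word of length at least `D`, and changes the length of the prefix by at most `D`. -/
def IsPrefixReplacementWith (D : ℕ) (f : Equiv.Perm Cantor) : Prop :=
  ∀ u : List Bool, D ≤ u.length →
    ∃ v, MapsCone f u v ∧ v.length ≤ u.length + D ∧ u.length ≤ v.length + D

namespace IsPrefixReplacementWith

variable {D D' : ℕ} {f f' : Equiv.Perm Cantor} {u v w : List Bool}

lemma one : IsPrefixReplacementWith 0 1 := fun u _ => ⟨u, MapsCone.one u, by simp, by simp⟩

lemma mul (h' : IsPrefixReplacementWith D' f') (h : IsPrefixReplacementWith D f) :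
    IsPrefixReplacementWith (D' + D) (f' * f) := by
  intro u hu
  obtain ⟨v, huv, hv, hv'⟩ := h u (by omega)
  obtain ⟨w, hvw, hw, hw'⟩ := h' v (by omega)
  exact ⟨w, hvw.mul huv, by omega, by omega⟩

lemma pow (h : IsPrefixReplacementWith D f) (n : ℕ) : IsPrefixReplacementWith (D * n) (f ^ n) := by
  induction n with
  | zero => simpa using one
  | succ n ih => rw [pow_succ, Nat.mul_succ]; exact ih.mul h

lemma length_le (hf : IsPrefixReplacementWith D f) (h : MapsCone f u v) :
    v.length ≤ u.length + D ∧ u.length ≤ v.length + D := by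
  obtain ⟨y, hy, hle, hge⟩ := hf (u ++ List.replicate D false) (by simp)
  rw [hy.unique (h.append _)] at hle hge
  simp only [List.length_append] at hle hge
  omega

lemma exists_mapsCone_pow (hf : IsPrefixReplacementWith D f) {n : ℕ}
    (h : ∀ m < n, ∀ y, MapsCone (f ^ m) w y → D ≤ y.length) : ∃ y, MapsCone (f ^ n) w y := by
  induction n with
  | zero => exact ⟨w, by simpa using MapsCone.one w⟩
  | succ n ih =>
    obtain ⟨y, hy⟩ := ih fun m hm => h m (by omega)
    obtain ⟨z, hz, -⟩ := hf y (h n n.lt_succ_self y hy)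
    exact ⟨z, by rw [pow_succ']; exact hz.mul hy⟩

-- Such an `f` is determined by the images of the finitely many cones of words of length `D`.
lemma finite_setOf (D : ℕ) : {f | IsPrefixReplacementWith D f}.Finite := by
  have exists_image (f : {f // IsPrefixReplacementWith D f}) (u : Fin D → Bool) :
      ∃ v : {v : List Bool | v.length ≤ D + D}, MapsCone f (List.ofFn u) v := by
    obtain ⟨v, hv, hle, -⟩ := f.2 (List.ofFn u) (by simp)
    exact ⟨⟨v, by simpa using hle⟩, hv⟩
  choose image himage using exists_image
  have := (List.finite_length_le Bool (D + D)).to_subtype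
  refine Set.finite_coe_iff.mp (Finite.of_injective image fun f f' hff' => ?_)
  ext1
  ext1 x
  rw [← prepend_ofFn x D, himage f, himage f', hff']

end IsPrefixReplacementWith

/-! ### Prefix replacement maps -/

lemma exists_length_le_of_finite {α : Type*} {A : Set (List α)} (hA : A.Finite) :
    ∃ D, ∀ a ∈ A, a.length ≤ D := by
  obtain ⟨D, hD⟩ := (hA.image List.length).bddAbove
  exact ⟨D, fun a ha => hD ⟨a, ha, rfl⟩⟩

lemma IsCompleteAntichain.exists_mem_isPrefix {A : Set (List Bool)} (hA : IsCompleteAntichain A)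
    {D : ℕ} (hD : ∀ a ∈ A, a.length ≤ D) {u : List Bool} (hu : D ≤ u.length) :
    ∃ a ∈ A, a <+: u := by
  obtain ⟨n, hn⟩ := hA.2.2 (prepend u fun _ => false)
  have hnD : n ≤ D := by simpa using hD _ hn
  rw [ofFn_prepend (hnD.trans hu)] at hn
  exact ⟨u.take n, hn, u.drop n, u.take_append_drop n⟩

namespace IsPrefixReplacement

variable {g : Equiv.Perm Cantor}

lemma inv (hg : IsPrefixReplacement g) : IsPrefixReplacement g⁻¹ := by
  obtain ⟨A, B, hA, hB, σ, hσ⟩ := hg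
  refine ⟨B, A, hB, hA, σ.symm, fun b ξ => ?_⟩
  rw [Equiv.Perm.inv_eq_iff_eq, hσ, Equiv.apply_symm_apply]

lemma exists_with (hg : IsPrefixReplacement g) : ∃ D, IsPrefixReplacementWith D g := by
  obtain ⟨A, B, hA, hB, σ, hσ⟩ := hg
  obtain ⟨D, hD⟩ := exists_length_le_of_finite hA.1
  obtain ⟨E, hE⟩ := exists_length_le_of_finite hB.1
  refine ⟨D + E, fun u hu => ?_⟩
  obtain ⟨a, ha, t, rfl⟩ := hA.exists_mem_isPrefix hD (Nat.le_of_add_right_le hu)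
  have hcone : MapsCone g a (σ ⟨a, ha⟩) := hσ ⟨a, ha⟩
  have haD := hD a ha
  have hσE := hE _ (σ ⟨a, ha⟩).2
  refine ⟨σ ⟨a, ha⟩ ++ t, hcone.append t, ?_, ?_⟩ <;> simp only [List.length_append] <;> omega

end IsPrefixReplacement

/-! ### Expanded cones -/

/-- `f` expands a cone by `p > 0` letters: it maps the cone of some word `w` onto the cone of an
extension of `w` by `p` letters. -/
def ExpandsCone (f : Equiv.Perm Cantor) (p : ℕ) : Prop :=
  ∃ w v, v ≠ [] ∧ v.length = p ∧ MapsCone f w (w ++ v)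

namespace ExpandsCone

variable {D p : ℕ} {f H : Equiv.Perm Cantor}

lemma pos (h : ExpandsCone f p) : 0 < p := by
  obtain ⟨w, v, hv, rfl, -⟩ := h
  exact List.length_pos_iff.mpr hv

lemma pow (h : ExpandsCone f p) {n : ℕ} (hn : n ≠ 0) : ExpandsCone (f ^ n) (n * p) := by
  have hp := h.pos
  obtain ⟨w, v, -, rfl, hwv⟩ := h
  obtain ⟨v', hv', hwv'⟩ := hwv.exists_pow n
  exact ⟨w, v', List.length_pos_iff.mp (by rw [hv']; positivity), hv', hwv'⟩

lemma conj (hH : IsPrefixReplacementWith D H) (h : ExpandsCone f p) :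
    ExpandsCone (H * f * H⁻¹) p := by
  obtain ⟨w, v, hv, rfl, hwv⟩ := h
  obtain ⟨v', hv', hpow⟩ := hwv.exists_pow D
  -- Conjugating by `f ^ D` moves the expanded cone to one that is small enough for `H`.
  have hdeep : MapsCone f (w ++ v') (w ++ v' ++ v) := by
    simpa [(Commute.pow_self f D).eq] using hwv.conj hpow
  have hlen : D ≤ (w ++ v').length := by
    have := Nat.le_mul_of_pos_right D (List.length_pos_iff.mpr hv)
    rw [List.length_append]
    omega
  obtain ⟨z, hz, -⟩ := hH _ hlen
  exact ⟨z, v, hv, rfl, hdeep.conj hz⟩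

lemma le_mul_natAbs (hf : IsPrefixReplacementWith D f) {k : ℤ} (h : ExpandsCone (f ^ k) p) :
    p ≤ D * k.natAbs := by
  obtain ⟨w, v, -, rfl, hwv⟩ := h
  obtain ⟨n, rfl | rfl⟩ := k.eq_nat_or_neg
  · have := ((hf.pow n).length_le (by simpa using hwv)).1
    simpa using this
  · have := ((hf.pow n).length_le (by simpa using hwv.inv)).2
    simpa using this

end ExpandsCone

/-! ### Elements of infinite order expand a cone -/

lemma exists_last_time_le {D n L : ℕ} {ℓ : ℕ → ℕ} (hjump : ∀ i < n, ℓ (i + 1) ≤ ℓ i + D)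
    (h0 : ℓ 0 ≤ L) (hn : L < ℓ n) :
    ∃ m < n, ℓ m ≤ L ∧ L < ℓ m + D ∧ ∀ j ∈ Set.Ioc m n, L < ℓ j := by
  let m := Nat.findGreatest (fun i => ℓ i ≤ L) n
  have hm : ℓ m ≤ L := Nat.findGreatest_spec (P := fun i => ℓ i ≤ L) n.zero_le h0
  have hlast : ∀ j ∈ Set.Ioc m n, L < ℓ j := fun j hj =>
    not_le.mp (Nat.findGreatest_is_greatest (P := fun i => ℓ i ≤ L) hj.1 hj.2)
  have hmn : m < n := (Nat.findGreatest_le n).lt_of_ne fun h => by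
    rw [← h] at hn
    exact hn.not_ge hm
  exact ⟨m, hmn, hm, (hlast (m + 1) ⟨m.lt_succ_self, hmn⟩).trans_le (hjump m hmn), hlast⟩

lemma exists_injective_strict_future_minima {D N n : ℕ} {ℓ : ℕ → ℕ}
    (hjump : ∀ i < n, ℓ (i + 1) ≤ ℓ i + D) (hrise : ℓ 0 + D * N < ℓ n) :
    ∃ m : Fin (N + 1) → ℕ, Function.Injective m ∧
      ∀ i, m i ≤ n ∧ ∀ j ∈ Set.Ioc (m i) n, ℓ (m i) < ℓ j := by
  have hlevel (i : Fin (N + 1)) : ℓ 0 + D * i < ℓ n :=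
    hrise.trans_le' (by gcongr; exact Nat.lt_succ_iff.mp i.2)
  choose m hmn hle hlt hlast using fun i : Fin (N + 1) =>
    exists_last_time_le hjump (Nat.le_add_right _ _) (hlevel i)
  refine ⟨m, fun i i' h => ?_, fun i => ⟨(hmn i).le, fun j hj => (hle i).trans_lt (hlast i j hj)⟩⟩
  wlog hii' : i < i' generalizing i i'
  · exact (not_lt.mp hii').eq_or_lt.elim Eq.symm fun hlt' => (this i' i h.symm hlt').symm
  have hgap : D * (i + 1) ≤ D * i' := Nat.mul_le_mul_left D hii'
  have hi' := hlt i'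
  have hi := hle i
  rw [h] at hi
  rw [Nat.mul_succ] at hgap
  omega

lemma exists_take_eq_of_length_rise {α : Type*} [Fintype α] {D c n : ℕ} {x : ℕ → List α}
    (hjump : ∀ i < n, (x (i + 1)).length ≤ (x i).length + D) (hlen : ∀ i ≤ n, c ≤ (x i).length)
    (hrise : (x 0).length + D * Fintype.card α ^ c < (x n).length) :
    ∃ i j, i < j ∧ j ≤ n ∧ (x i).take c = (x j).take c ∧
      ∀ l ∈ Set.Ioc i j, (x i).length < (x l).length := by
  obtain ⟨m, hm, hmin⟩ := exists_injective_strict_future_minima (ℓ := fun i => (x i).length)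
    hjump hrise
  let top (i : Fin (Fintype.card α ^ c + 1)) : List.Vector α c :=
    ⟨(x (m i)).take c, by simpa using hlen _ (hmin i).1⟩
  obtain ⟨i, i', hne, htop⟩ := Fintype.exists_ne_map_eq_of_card_lt top (by simp [card_vector])
  wlog hlt : m i < m i' generalizing i i'
  · exact this i' i hne.symm htop.symm ((not_lt.mp hlt).lt_of_ne (hm.ne hne.symm))
  exact ⟨m i, m i', hlt, (hmin i').1, congrArg Subtype.val htop,
    fun l hl => (hmin i).2 l ⟨hl.1, hl.2.trans (hmin i').1⟩⟩

section Positivity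

variable {D D' n : ℕ} {f g : Equiv.Perm Cantor} {u v : List Bool}

lemma exists_orbit (hf : IsPrefixReplacementWith D f) (hu : D * (n + 1) ≤ u.length) :
    ∃ x : ℕ → List Bool, ∀ i ≤ n, MapsCone (f ^ i) u (x i) ∧ D ≤ (x i).length := by
  have exists_image (i : ℕ) (hi : i ≤ n) : ∃ y, MapsCone (f ^ i) u y ∧ D ≤ y.length := by
    have hDi : D * (i + 1) ≤ u.length := hu.trans' (by gcongr)
    rw [Nat.mul_succ] at hDi
    obtain ⟨y, hy, -, hle⟩ := hf.pow i u (by omega)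
    exact ⟨y, hy, by omega⟩
  choose! x hx using exists_image
  exact ⟨x, hx⟩

lemma expandsCone_pow_of_take_eq (hf : IsPrefixReplacementWith D f)
    (h : MapsCone (f ^ n) u v) (hu : D ≤ u.length) (htake : u.take D = v.take D)
    (hlt : u.length < v.length)
    (hmin : ∀ m < n, ∀ y, MapsCone (f ^ m) u y → u.length ≤ y.length) :
    ExpandsCone (f ^ n) (v.length - u.length) := by
  have happend {m : ℕ} {y : List Bool} (hy : MapsCone (f ^ m) (u.take D) y) :
      MapsCone (f ^ m) u (y ++ u.drop D) := by
    simpa using hy.append (u.drop D)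
  obtain ⟨y, hy⟩ := hf.exists_mapsCone_pow (w := u.take D) (n := n) fun m hm y hy => by
    have := hmin m hm _ (happend hy)
    simp only [List.length_append, List.length_drop] at this
    omega
  obtain rfl : v = y ++ u.drop D := h.unique (happend hy)
  simp only [List.length_append, List.length_drop] at hlt ⊢
  have hDy : D < y.length := by omega
  rw [List.take_append_of_le_length hDy.le] at htake
  refine ⟨u.take D, y.drop D, ?_, ?_, ?_⟩
  · simpa using hDy
  · rw [List.length_drop]
    omega
  · rwa [htake, List.take_append_drop, ← htake]

lemma exists_expandsCone_pow_of_orbit (hf : IsPrefixReplacementWith D f) {x : ℕ → List Bool}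
    (hx : ∀ i ≤ n, MapsCone (f ^ i) u (x i)) (hlen : ∀ i ≤ n, D ≤ (x i).length)
    (hrise : (x 0).length + D * 2 ^ D < (x n).length) :
    ∃ k p, ExpandsCone (f ^ k) p := by
  have hmove {i m : ℕ} (him : i + m ≤ n) : MapsCone (f ^ m) (x i) (x (i + m)) :=
    MapsCone.of_mul (by rw [← pow_add, add_comm]; exact hx _ him) (hx i (by omega))
  have hjump (i : ℕ) (hi : i < n) : (x (i + 1)).length ≤ (x i).length + D :=
    (hf.length_le (by simpa using hmove (m := 1) hi)).1
  obtain ⟨i, j, hij, hjn, htake, hmin⟩ := exists_take_eq_of_length_rise hjump hlen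
    (by simpa using hrise)
  obtain ⟨k, rfl⟩ := Nat.exists_eq_add_of_lt hij
  refine ⟨k + 1, _, expandsCone_pow_of_take_eq hf (hmove hjn) (hlen i (by omega)) htake
    (hmin _ ⟨hij, le_rfl⟩) fun m hm y hy => ?_⟩
  obtain rfl := hy.unique (hmove (by omega))
  obtain rfl | hm0 := m.eq_zero_or_pos
  · rfl
  · exact (hmin (i + m) ⟨by omega, by omega⟩).le

lemma exists_expandsCone_pow (hf : IsPrefixReplacementWith D f) (h : MapsCone (f ^ n) u v)
    (hrise : u.length + D * 2 ^ D < v.length) : ∃ k p, ExpandsCone (f ^ k) p := by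
  -- The padding `t` keeps the whole orbit of `u ++ t` up to time `n` within reach of `f`.
  let t := List.replicate (D * (n + 1)) false
  obtain ⟨x, hx⟩ := exists_orbit (n := n) (u := u ++ t) hf (by simp [t])
  have hx0 : x 0 = u ++ t := (hx 0 n.zero_le).1.unique (MapsCone.one _)
  have hxn : x n = v ++ t := (hx n le_rfl).1.unique (h.append t)
  refine exists_expandsCone_pow_of_orbit hf (fun i hi => (hx i hi).1) (fun i hi => (hx i hi).2) ?_
  simp only [hx0, hxn, List.length_append]
  omega

lemma exists_expandsCone_zpow (hg : IsPrefixReplacementWith D g)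
    (hg' : IsPrefixReplacementWith D' g⁻¹) (hord : ¬ IsOfFinOrder g) :
    ∃ (k : ℤ) (p : ℕ), ExpandsCone (g ^ k) p := by
  by_contra! hno
  have hup {n u v} (h : MapsCone (g ^ n) u v) : v.length ≤ u.length + D * 2 ^ D := by
    by_contra! hrise
    obtain ⟨k, p, hkp⟩ := exists_expandsCone_pow hg h hrise
    exact hno k p (by simpa using hkp)
  have hdown {n u v} (h : MapsCone (g ^ n) u v) : u.length ≤ v.length + D' * 2 ^ D' := by
    by_contra! hdrop
    obtain ⟨k, p, hkp⟩ := exists_expandsCone_pow hg' (by simpa using h.inv) hdrop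
    exact hno (-k) p (by simpa using hkp)
  have hpow (n : ℕ) : IsPrefixReplacementWith (D + D * 2 ^ D + D' * 2 ^ D') (g ^ n) := by
    intro u hu
    obtain ⟨v, hv⟩ := hg.exists_mapsCone_pow (w := u) (n := n) fun m _ y hy => by
      have := hdown hy
      omega
    have := hup hv
    have := hdown hv
    exact ⟨v, hv, by omega, by omega⟩
  exact Set.infinite_of_injective_forall_mem (injective_pow_iff_not_isOfFinOrder.mpr hord) hpow
    (IsPrefixReplacementWith.finite_setOf _)

end Positivity

/-! ### The expansion rate -/

/-- The supremum of `p / |k|` over all `p` and `k` such that `g ^ k` expands a cone by `p` letters.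
Negative `k` are included, so that contraction by `g` counts as well. The case `k = 0` does not
occur, and values in `ENNReal` make the supremum meaningful for every permutation. -/
noncomputable def expansionRate (g : Equiv.Perm Cantor) : ENNReal :=
  ⨆ (k : ℤ) (p : ℕ) (_ : ExpandsCone (g ^ k) p), (p / k.natAbs : ENNReal)

section ExpansionRate

variable {g h : Equiv.Perm Cantor}

lemma not_expandsCone_one (p : ℕ) : ¬ ExpandsCone 1 p := fun h => by
  have hle := ExpandsCone.le_mul_natAbs (k := 1) .one (by simpa using h)
  exact h.pos.ne' (by simpa using hle)

lemma expansionRate_le_iff {c : ENNReal} :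
    expansionRate g ≤ c ↔
      ∀ (k : ℤ) (p : ℕ), ExpandsCone (g ^ k) p → (p : ENNReal) ≤ c * k.natAbs := by
  simp only [expansionRate, iSup_le_iff]
  refine forall₂_congr fun k p => forall_congr' fun hkp => ?_
  have hk : k ≠ 0 := by
    rintro rfl
    exact not_expandsCone_one p (by simpa using hkp)
  exact ENNReal.div_le_iff (by simpa using hk) (ENNReal.natCast_ne_top _)

lemma le_expansionRate_mul {k : ℤ} {p : ℕ} (hkp : ExpandsCone (g ^ k) p) :
    (p : ENNReal) ≤ expansionRate g * k.natAbs :=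
  expansionRate_le_iff.mp le_rfl k p hkp

lemma expansionRate_zpow_le (g : Equiv.Perm Cantor) (n : ℤ) :
    expansionRate (g ^ n) ≤ n.natAbs * expansionRate g := by
  refine expansionRate_le_iff.mpr fun k p hkp => ?_
  rw [← zpow_mul] at hkp
  calc (p : ENNReal) ≤ expansionRate g * (n * k).natAbs := le_expansionRate_mul hkp
    _ = n.natAbs * expansionRate g * k.natAbs := by
      rw [Int.natAbs_mul, Nat.cast_mul, ← mul_assoc, mul_comm (expansionRate g)]

lemma le_expansionRate_zpow (g : Equiv.Perm Cantor) (n : ℤ) :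
    n.natAbs * expansionRate g ≤ expansionRate (g ^ n) := by
  obtain rfl | hn := eq_or_ne n 0
  · simp
  have hn0 : (n.natAbs : ENNReal) ≠ 0 := by simpa using hn
  rw [mul_comm, ← ENNReal.le_div_iff_mul_le (.inl hn0) (.inl (ENNReal.natCast_ne_top _)),
    expansionRate_le_iff]
  intro k p hkp
  have hexp : ExpandsCone ((g ^ n) ^ (n.sign * k)) (n.natAbs * p) := by
    have := hkp.pow (Int.natAbs_ne_zero.mpr hn)
    rwa [← zpow_natCast, ← zpow_mul, mul_comm k, ← Int.mul_sign_self, mul_assoc, zpow_mul] at this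
  have hle := le_expansionRate_mul hexp
  rw [Int.natAbs_mul, Int.natAbs_sign_of_ne_zero hn, one_mul, Nat.cast_mul, mul_comm] at hle
  rwa [← ENNReal.mul_div_right_comm,
    ENNReal.le_div_iff_mul_le (.inl hn0) (.inl (ENNReal.natCast_ne_top _))]

lemma expansionRate_zpow (g : Equiv.Perm Cantor) (n : ℤ) :
    expansionRate (g ^ n) = n.natAbs * expansionRate g :=
  (expansionRate_zpow_le g n).antisymm (le_expansionRate_zpow g n)

lemma expansionRate_le_conj (hh : IsPrefixReplacement h) (g : Equiv.Perm Cantor) :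
    expansionRate g ≤ expansionRate (h * g * h⁻¹) := by
  obtain ⟨D, hD⟩ := hh.exists_with
  refine expansionRate_le_iff.mpr fun k p hkp => le_expansionRate_mul ?_
  rw [conj_zpow]
  exact hkp.conj hD

lemma expansionRate_conj (hh : IsPrefixReplacement h) (g : Equiv.Perm Cantor) :
    expansionRate (h * g * h⁻¹) = expansionRate g := by
  refine le_antisymm ?_ (expansionRate_le_conj hh g)
  simpa [mul_assoc] using expansionRate_le_conj hh.inv (h * g * h⁻¹)

lemma expansionRate_ne_top (hg : IsPrefixReplacement g) : expansionRate g ≠ ⊤ := by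
  obtain ⟨D, hD⟩ := hg.exists_with
  refine ne_top_of_le_ne_top (ENNReal.natCast_ne_top D) (expansionRate_le_iff.mpr fun k p hkp => ?_)
  exact_mod_cast hkp.le_mul_natAbs hD

lemma expansionRate_ne_zero (hg : IsPrefixReplacement g) (hord : ¬ IsOfFinOrder g) :
    expansionRate g ≠ 0 := by
  obtain ⟨D, hD⟩ := hg.exists_with
  obtain ⟨D', hD'⟩ := hg.inv.exists_with
  obtain ⟨k, p, hkp⟩ := exists_expandsCone_zpow hD hD' hord
  intro hzero
  have hle := le_expansionRate_mul hkp
  rw [hzero, zero_mul] at hle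
  exact hkp.pos.ne' (by simpa using hle)

end ExpansionRate

/-- If `g` is a prefix replacement permutation of the Cantor set of infinite order,
`h` is a prefix replacement permutation, and `h⁻¹ ∘ gʳ ∘ h = gˢ`, then `|r| = |s|`. -/
theorem abs_eq_abs_of_conj_zpow (g h : Equiv.Perm Cantor)
    (hg : IsPrefixReplacement g) (hh : IsPrefixReplacement h)
    (hord : ¬ IsOfFinOrder g) (r s : ℤ)
    (hconj : h⁻¹ * g ^ r * h = g ^ s) :
    |r| = |s| := by
  have hrate : r.natAbs * expansionRate g = s.natAbs * expansionRate g :=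
    calc r.natAbs * expansionRate g
      _ = expansionRate (g ^ r) := (expansionRate_zpow g r).symm
      _ = expansionRate (h⁻¹ * g ^ r * h⁻¹⁻¹) := (expansionRate_conj hh.inv (g ^ r)).symm
      _ = expansionRate (g ^ s) := by rw [inv_inv, hconj]
      _ = s.natAbs * expansionRate g := expansionRate_zpow g s
  rw [ENNReal.mul_left_inj (expansionRate_ne_zero hg hord) (expansionRate_ne_top hg),
    Nat.cast_inj] at hrate
  rw [Int.abs_eq_natAbs, Int.abs_eq_natAbs, hrate]
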